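/- Let q ≥ 1 and μ, ν ∈ ℂ with Re μ > (q-1)/2 and Re ν > (q-1)/2. Then the function x ↦ det(x)^{μ-(q+1)/2} det(I-x)^{ν-(q+1)/2} is absolutely integrable over the set {x ∈ Sym(q,ℝ) : 0 < x < I} with respect to Lebesgue measure on the space of q×q real symmetric matrices. -/

import Mathlib

open MeasureTheory Matrix Complex

variable (q : ℕ)

/-- Index set for the independent entries of a symmetric `q×q` matrix. -/
abbrev SymIdx (q : ℕ) := {p : Fin q × Fin q // p.1 ≤ p.2}

/-- The symmetric matrix determined by its upper-triangular entries. -/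
def symOfFun (f : SymIdx q → ℝ) : Matrix (Fin q) (Fin q) ℝ := fun i j =>
  if h : i ≤ j then f ⟨(i, j), h⟩ else f ⟨(j, i), (not_le.mp h).le⟩

instance : MeasurableSpace (Matrix (Fin q) (Fin q) ℝ) :=
  inferInstanceAs (MeasurableSpace ((Fin q) → (Fin q) → ℝ))

/-- Lebesgue measure on the space of real symmetric `q×q` matrices, realized as the
pushforward of Lebesgue measure on the coordinates. -/
noncomputable def symMeasure : Measure (Matrix (Fin q) (Fin q) ℝ) :=
  Measure.map (symOfFun q) volume

open scoped ENNReal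

/-- One-dimensional beta integrand. -/
noncomputable def bfun (a b u : ℝ) : ℝ≥0∞ :=
  if 0 < u ∧ u < 1 then ENNReal.ofReal (u ^ a * (1 - u) ^ b) else 0

lemma bfun_eq {a b : ℝ} (ha : -1 < a) (hb : -1 < b) (u : ℝ) :
    bfun a b u = ENNReal.ofReal (ProbabilityTheory.beta (a + 1) (b + 1)) *
      ProbabilityTheory.betaPDF (a + 1) (b + 1) u := by
  have hB := ProbabilityTheory.beta_pos (α := a + 1) (β := b + 1) (by linarith) (by linarith)
  unfold bfun
  rw [ProbabilityTheory.betaPDF_eq]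
  split_ifs with h
  · rw [← ENNReal.ofReal_mul hB.le]
    congr 1
    simp only [add_sub_cancel_right]
    field_simp
  · simp

lemma bfun_measurable {a b : ℝ} (ha : -1 < a) (hb : -1 < b) : Measurable (bfun a b) := by
  have : bfun a b = fun u => ENNReal.ofReal (ProbabilityTheory.beta (a + 1) (b + 1)) *
      ProbabilityTheory.betaPDF (a + 1) (b + 1) u := funext (bfun_eq ha hb)
  rw [this]
  exact ((ProbabilityTheory.measurable_betaPDFReal _ _).ennreal_ofReal).const_mul _

lemma bfun_lintegral {a b : ℝ} (ha : -1 < a) (hb : -1 < b) : ∫⁻ u, bfun a b u < ⊤ := by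
  simp_rw [bfun_eq ha hb]
  rw [lintegral_const_mul _ (by
    exact ((ProbabilityTheory.measurable_betaPDFReal _ _).ennreal_ofReal)),
    ProbabilityTheory.lintegral_betaPDF_eq_one (by linarith) (by linarith)]
  simp

lemma betaPDFReal_integrable {t : ℝ} (ht : -1 < t) :
    Integrable (ProbabilityTheory.betaPDFReal 1 (t + 1)) := by
  refine (lintegral_ofReal_ne_top_iff_integrable
    (ProbabilityTheory.measurable_betaPDFReal _ _).aestronglyMeasurable ?_).1 ?_
  · refine Filter.Eventually.of_forall fun x => ?_
    by_cases h : 0 < x ∧ x < 1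
    · exact (ProbabilityTheory.betaPDFReal_pos h.1 h.2 one_pos (by linarith)).le
    · simp [ProbabilityTheory.betaPDFReal, h]
  · have := ProbabilityTheory.lintegral_betaPDF_eq_one (α := 1) (β := t + 1) one_pos (by linarith)
    unfold ProbabilityTheory.betaPDF at this
    rw [this]; simp

/-- Radial ball integrand. -/
noncomputable def ballReal (t r : ℝ) : ℝ := if r < 1 then (1 - r ^ 2) ^ t else 0

lemma ball_radial (n : ℕ) {t : ℝ} (ht : -1 < t) :
    Integrable (fun w : EuclideanSpace ℝ (Fin (n + 1)) => ballReal t ‖w‖) := by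
  rw [integrable_fun_norm_addHaar volume (f := ballReal t)]
  have hB := ProbabilityTheory.beta_pos (α := 1) (β := t + 1) (by linarith) (by linarith)
  set B := ProbabilityTheory.beta 1 (t + 1) with hBdef
  refine Integrable.mono' (g := fun r => (max 1 (2 ^ t) * B) *
    ProbabilityTheory.betaPDFReal 1 (t + 1) r) ?_ ?_ ?_
  · exact ((betaPDFReal_integrable ht).const_mul _).integrableOn
  · refine Measurable.aestronglyMeasurable ?_
    refine Measurable.smul (measurable_id.pow_const _) ?_
    unfold ballReal
    refine Measurable.ite measurableSet_Iio (by fun_prop) measurable_const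
  · refine (ae_restrict_iff' measurableSet_Ioi).2 (Filter.Eventually.of_forall fun r hr => ?_)
    have hr : 0 < r := hr
    unfold ballReal ProbabilityTheory.betaPDFReal
    by_cases h : r < 1
    · rw [if_pos h, if_pos ⟨hr, h⟩, ← hBdef]
      have e : (1 - r ^ 2) = (1 + r) * (1 - r) := by ring
      have h1 : 0 < 1 - r := by linarith
      rw [e, Real.mul_rpow (by linarith) h1.le]
      have h2 : (1 + r) ^ t ≤ max 1 (2 ^ t) := by
        rcases le_total 0 t with h0 | h0
        · exact (Real.rpow_le_rpow (by linarith) (by linarith) h0).trans (le_max_right _ _)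
        · exact (Real.rpow_le_one_of_one_le_of_nonpos (by linarith) h0).trans (le_max_left _ _)
      have h3 : 0 < (1 - r) ^ t := Real.rpow_pos_of_pos h1 _
      have h4 : 0 < (1 + r) ^ t := Real.rpow_pos_of_pos (by linarith) _
      have h5 : r ^ (Module.finrank ℝ (EuclideanSpace ℝ (Fin (n + 1))) - 1) ≤ 1 :=
        pow_le_one₀ hr.le h.le
      rw [smul_eq_mul, Real.norm_of_nonneg (by positivity)]
      simp only [sub_self, Real.rpow_zero, add_sub_cancel_right]
      have : max 1 (2 ^ t) * B * (1 / B * 1 * (1 - r) ^ t) = 1 * (max 1 (2 ^ t) * (1 - r) ^ t) := by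
        field_simp
      rw [this]
      gcongr
    · simp [h]

/-- Ball integrand. -/
noncomputable def ballFun {n : ℕ} (t : ℝ) (w : Fin n → ℝ) : ℝ≥0∞ :=
  if w ⬝ᵥ w < 1 then ENNReal.ofReal ((1 - w ⬝ᵥ w) ^ t) else 0

lemma ballFun_measurable {n : ℕ} (t : ℝ) : Measurable (ballFun (n := n) t) := by
  unfold ballFun dotProduct
  refine Measurable.ite (measurableSet_lt (by fun_prop) measurable_const) ?_ measurable_const
  fun_prop

lemma ballFun_lintegral (n : ℕ) {t : ℝ} (ht : -1 < t) :
    ∫⁻ w : Fin n → ℝ, ballFun t w < ⊤ := by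
  cases n with
  | zero =>
    rw [lintegral_unique]
    refine ENNReal.mul_lt_top ?_ (by simp [volume_pi])
    unfold ballFun
    split_ifs <;> simp
  | succ n =>
    rw [← (PiLp.volume_preserving_ofLp (Fin (n + 1))).lintegral_comp (ballFun_measurable t)]
    refine lt_of_le_of_lt (le_of_eq ?_) (ball_radial n ht).2
    refine lintegral_congr fun w => ?_
    have e : WithLp.ofLp w ⬝ᵥ WithLp.ofLp w = ‖w‖ ^ 2 := by
      rw [EuclideanSpace.norm_sq_eq]
      simp [dotProduct, sq]
    unfold ballFun ballReal
    rw [e]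
    beta_reduce
    by_cases h : ‖w‖ < 1
    · have h2 : ‖w‖ ^ 2 < 1 := by nlinarith [norm_nonneg w]
      rw [if_pos h, if_pos h2, Real.enorm_eq_ofReal]
      exact Real.rpow_nonneg (by linarith) _
    · have h2 : ¬ ‖w‖ ^ 2 < 1 := by nlinarith [norm_nonneg w]
      rw [if_neg h, if_neg h2]; simp

lemma c_int {a b : ℝ} (ha : -1 < a) (hb : -1 < b) (α L : ℝ) (hL : 0 < L) :
    ∫⁻ c : ℝ, (if 0 < c - α ∧ 0 < L - (c - α) then
      ENNReal.ofReal ((c - α) ^ a * (L - (c - α)) ^ b) else 0) =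
    ENNReal.ofReal (L ^ (a + b + 1)) * ∫⁻ u, bfun a b u := by
  rw [lintegral_sub_right_eq_self (fun c : ℝ => if 0 < c ∧ 0 < L - c then
      ENNReal.ofReal (c ^ a * (L - c) ^ b) else 0) α]
  have h1 : ∀ c : ℝ, (if 0 < c ∧ 0 < L - c then
      ENNReal.ofReal (c ^ a * (L - c) ^ b) else 0) =
      ENNReal.ofReal (L ^ (a + b)) * bfun a b (L⁻¹ * c) := by
    intro c
    unfold bfun
    have e1 : 0 < L⁻¹ * c ↔ 0 < c := by
      constructor
      · intro h; exact (pos_iff_pos_of_mul_pos h).1 (inv_pos.2 hL)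
      · intro h; positivity
    have e2 : L⁻¹ * c < 1 ↔ 0 < L - c := by
      rw [inv_mul_lt_iff₀ hL, sub_pos, mul_one]
    simp only [e1, e2]
    split_ifs with h
    · rw [← ENNReal.ofReal_mul (by positivity)]
      congr 1
      have e3 : 1 - L⁻¹ * c = L⁻¹ * (L - c) := by field_simp
      rw [e3, Real.mul_rpow (by positivity) h.1.le, Real.mul_rpow (by positivity) h.2.le,
        Real.rpow_add hL, Real.inv_rpow hL.le, Real.inv_rpow hL.le]
      have := Real.rpow_pos_of_pos hL a
      have := Real.rpow_pos_of_pos hL b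
      field_simp
    · simp
  simp_rw [h1]
  have hm := bfun_measurable ha hb
  rw [lintegral_const_mul _ (by fun_prop)]
  have h2 : ∫⁻ c, bfun a b (L⁻¹ * c) = ENNReal.ofReal L * ∫⁻ u, bfun a b u := by
    rw [← lintegral_map (f := bfun a b) (g := fun c => L⁻¹ * c) hm (by fun_prop),
      Real.map_volume_mul_left (by positivity), lintegral_smul_measure, inv_inv, abs_of_pos hL]
    rfl
  rw [h2, ← mul_assoc, ← ENNReal.ofReal_mul (by positivity), Real.rpow_add hL (a + b) 1,
    Real.rpow_one]

open scoped MatrixOrder in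
lemma posDef_factor {n : ℕ} {M : Matrix (Fin n) (Fin n) ℝ} (hM : M.PosDef) :
    ∃ B : Matrix (Fin n) (Fin n) ℝ, M = Bᵀ * B := by
  obtain ⟨B, hB⟩ := CStarAlgebra.nonneg_iff_eq_star_mul_self.mp hM.posSemidef.nonneg
  refine ⟨B, ?_⟩
  rw [hB, Matrix.star_eq_conjTranspose, Matrix.conjTranspose_eq_transpose_of_trivial]

lemma v_int {n : ℕ} {M : Matrix (Fin n) (Fin n) ℝ} (hM : M.PosDef) (t : ℝ) :
    ∫⁻ v : Fin n → ℝ, (if v ⬝ᵥ M *ᵥ v < 1 then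
      ENNReal.ofReal ((1 - v ⬝ᵥ M *ᵥ v) ^ t) else 0) =
    ENNReal.ofReal (M.det ^ (-(1 / 2) : ℝ)) * ∫⁻ w : Fin n → ℝ, ballFun t w := by
  obtain ⟨B, hB⟩ := posDef_factor hM
  have hd := hM.det_pos
  have hdet : M.det = B.det ^ 2 := by rw [hB, Matrix.det_mul, Matrix.det_transpose, sq]
  have hB0 : B.det ≠ 0 := by
    intro h; rw [hdet, h] at hd; simp at hd
  have e : ∀ v : Fin n → ℝ, v ⬝ᵥ M *ᵥ v = (B *ᵥ v) ⬝ᵥ (B *ᵥ v) := by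
    intro v
    rw [hB, ← Matrix.mulVec_mulVec, Matrix.dotProduct_mulVec, Matrix.vecMul_transpose]
  have e2 : ∀ v : Fin n → ℝ, (if v ⬝ᵥ M *ᵥ v < 1 then
      ENNReal.ofReal ((1 - v ⬝ᵥ M *ᵥ v) ^ t) else 0) = ballFun t (toLin' B v) := by
    intro v
    unfold ballFun
    rw [e, toLin'_apply]
  simp_rw [e2]
  rw [← lintegral_map (f := ballFun t) (g := toLin' B) (ballFun_measurable t)
    (LinearMap.continuous_of_finiteDimensional _).measurable,
    Real.map_matrix_volume_pi_eq_smul_volume_pi hB0, lintegral_smul_measure]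
  have e3 : M.det ^ (-(1 / 2) : ℝ) = |B.det⁻¹| := by
    rw [hdet, Real.rpow_neg (sq_nonneg _), ← Real.sqrt_eq_rpow, Real.sqrt_sq_eq_abs, abs_inv]
  rw [e3]; rfl

/-- Bordered symmetric matrix. -/
def bord {n : ℕ} (A : Matrix (Fin n) (Fin n) ℝ) (v : Fin n → ℝ) (c : ℝ) :
    Matrix (Fin (n + 1)) (Fin (n + 1)) ℝ :=
  Matrix.of (Fin.cons (Fin.cons c v) (fun i => Fin.cons (v i) (A i)))

@[simp] lemma bord_00 {n : ℕ} (A : Matrix (Fin n) (Fin n) ℝ) (v : Fin n → ℝ) (c : ℝ) :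
    bord A v c 0 0 = c := rfl
@[simp] lemma bord_0s {n : ℕ} (A : Matrix (Fin n) (Fin n) ℝ) (v : Fin n → ℝ) (c : ℝ) (j : Fin n) :
    bord A v c 0 j.succ = v j := rfl
@[simp] lemma bord_s0 {n : ℕ} (A : Matrix (Fin n) (Fin n) ℝ) (v : Fin n → ℝ) (c : ℝ) (j : Fin n) :
    bord A v c j.succ 0 = v j := rfl
@[simp] lemma bord_ss {n : ℕ} (A : Matrix (Fin n) (Fin n) ℝ) (v : Fin n → ℝ) (c : ℝ)
    (i j : Fin n) : bord A v c i.succ j.succ = A i j := rfl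

lemma one_sub_bord {n : ℕ} (A : Matrix (Fin n) (Fin n) ℝ) (v : Fin n → ℝ) (c : ℝ) :
    1 - bord A v c = bord (1 - A) (-v) (1 - c) := by
  ext i j
  refine Fin.cases ?_ (fun i => ?_) i <;> refine Fin.cases ?_ (fun j => ?_) j
  · simp
  · simp [Matrix.one_apply, Fin.succ_ne_zero, (Fin.succ_ne_zero _).symm]
  · simp [Matrix.one_apply, Fin.succ_ne_zero, (Fin.succ_ne_zero _).symm]
  · simp [Matrix.one_apply]

/-- Splitting off the zeroth index. -/
def splitEquiv (n : ℕ) : Unit ⊕ Fin n ≃ Fin (n + 1) where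
  toFun := Sum.elim (fun _ => 0) Fin.succ
  invFun := Fin.cases (Sum.inl ()) Sum.inr
  left_inv x := by rcases x with _ | x <;> rfl
  right_inv x := by refine Fin.cases ?_ (fun i => ?_) x <;> rfl

lemma det_bord {n : ℕ} (A : Matrix (Fin n) (Fin n) ℝ) (hA : A.det ≠ 0) (v : Fin n → ℝ) (c : ℝ) :
    (bord A v c).det = A.det * (c - v ⬝ᵥ A⁻¹ *ᵥ v) := by
  have := Matrix.invertibleOfIsUnitDet A (isUnit_iff_ne_zero.2 hA)
  rw [← Matrix.det_submatrix_equiv_self (splitEquiv n)]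
  have h : (bord A v c).submatrix (splitEquiv n) (splitEquiv n) =
      fromBlocks (Matrix.of fun _ _ => c) (replicateRow Unit v) (replicateCol Unit v) A := by
    ext i j
    rcases i with i | i <;> rcases j with j | j <;> rfl
  rw [h, det_fromBlocks₂₂, Matrix.invOf_eq_nonsing_inv, Matrix.det_unique (n := Unit)]
  congr 1
  rw [Matrix.mul_assoc, ← Matrix.replicateCol_mulVec]
  rfl

lemma bord_sub {n : ℕ} {A : Matrix (Fin n) (Fin n) ℝ} {v : Fin n → ℝ} {c : ℝ}
    (h : (bord A v c).PosDef) : A.PosDef := by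
  have := h.submatrix (Fin.succ_injective n)
  have e : A = (bord A v c).submatrix Fin.succ Fin.succ := rfl
  rw [e]
  exact this

open Classical in
/-- The integrand of the matrix beta integral, extended by zero. -/
noncomputable def GG (n : ℕ) (a b : ℝ) (x : Matrix (Fin n) (Fin n) ℝ) : ℝ≥0∞ :=
  if x.PosDef ∧ (1 - x).PosDef then ENNReal.ofReal (x.det ^ a * (1 - x).det ^ b) else 0

lemma GG_bord_le {n : ℕ} {a b : ℝ} {A : Matrix (Fin n) (Fin n) ℝ} (hA : A.PosDef)
    (hA' : (1 - A).PosDef) (v : Fin n → ℝ) (c : ℝ) :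
    GG (n + 1) a b (bord A v c) ≤ ENNReal.ofReal (A.det ^ a * (1 - A).det ^ b) *
      (if 0 < c - v ⬝ᵥ A⁻¹ *ᵥ v ∧
          0 < (1 - v ⬝ᵥ A⁻¹ *ᵥ v - v ⬝ᵥ (1 - A)⁻¹ *ᵥ v) - (c - v ⬝ᵥ A⁻¹ *ᵥ v) then
        ENNReal.ofReal ((c - v ⬝ᵥ A⁻¹ *ᵥ v) ^ a *
          ((1 - v ⬝ᵥ A⁻¹ *ᵥ v - v ⬝ᵥ (1 - A)⁻¹ *ᵥ v) - (c - v ⬝ᵥ A⁻¹ *ᵥ v)) ^ b) else 0) := by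
  unfold GG
  by_cases h : (bord A v c).PosDef ∧ (1 - bord A v c).PosDef
  · rw [if_pos h]
    obtain ⟨h1, h2⟩ := h
    have d1 := h1.det_pos
    have d2 := h2.det_pos
    have p1 := hA.det_pos
    have p2 := hA'.det_pos
    rw [one_sub_bord] at d2 ⊢
    rw [det_bord _ p1.ne'] at d1 ⊢
    rw [det_bord _ p2.ne'] at d2 ⊢
    have e : 1 - c - (-v) ⬝ᵥ (1 - A)⁻¹ *ᵥ (-v) =
      (1 - v ⬝ᵥ A⁻¹ *ᵥ v - v ⬝ᵥ (1 - A)⁻¹ *ᵥ v) - (c - v ⬝ᵥ A⁻¹ *ᵥ v) := by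
      rw [Matrix.mulVec_neg, neg_dotProduct, dotProduct_neg]; ring
    rw [e] at d2 ⊢
    have q1 := (mul_pos_iff_of_pos_left p1).1 d1
    have q2 := (mul_pos_iff_of_pos_left p2).1 d2
    rw [if_pos ⟨q1, q2⟩, ← ENNReal.ofReal_mul (by positivity), Real.mul_rpow p1.le q1.le,
      Real.mul_rpow p2.le q2.le]
    refine ENNReal.ofReal_le_ofReal (le_of_eq ?_)
    ring
  · rw [if_neg h]; simp

lemma det_inv_add {n : ℕ} {A : Matrix (Fin n) (Fin n) ℝ} (hA : A.PosDef)
    (hA' : (1 - A).PosDef) : (A⁻¹ + (1 - A)⁻¹).det = (A.det * (1 - A).det)⁻¹ := by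
  have u1 : IsUnit A.det := isUnit_iff_ne_zero.2 hA.det_pos.ne'
  have u2 : IsUnit (1 - A).det := isUnit_iff_ne_zero.2 hA'.det_pos.ne'
  have : A⁻¹ + (1 - A)⁻¹ = A⁻¹ * (1 - A)⁻¹ := by
    have h1 : A⁻¹ * ((1 - A) + A) * (1 - A)⁻¹ = A⁻¹ + (1 - A)⁻¹ := by
      rw [Matrix.mul_add, Matrix.add_mul, Matrix.mul_assoc, Matrix.mul_nonsing_inv _ u2,
        Matrix.nonsing_inv_mul _ u1, Matrix.mul_one, Matrix.one_mul]
    rw [← h1, sub_add_cancel, Matrix.mul_one]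
  rw [this, Matrix.det_mul, Matrix.det_nonsing_inv, Matrix.det_nonsing_inv,
    Ring.inverse_eq_inv', mul_inv]

lemma GG_step {n : ℕ} {a b : ℝ} (ha : -1 < a) (hb : -1 < b) (A : Matrix (Fin n) (Fin n) ℝ) :
    ∫⁻ v : Fin n → ℝ, ∫⁻ c : ℝ, GG (n + 1) a b (bord A v c) ≤
      ((∫⁻ u, bfun a b u) * ∫⁻ w : Fin n → ℝ, ballFun (a + b + 1) w) *
        GG n (a + 1 / 2) (b + 1 / 2) A := by
  by_cases h : A.PosDef ∧ (1 - A).PosDef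
  · obtain ⟨hA, hA'⟩ := h
    have p1 := hA.det_pos
    have p2 := hA'.det_pos
    have hM := hA.inv.add hA'.inv
    have key : ∀ v : Fin n → ℝ, ∫⁻ c : ℝ, GG (n + 1) a b (bord A v c) ≤
        (ENNReal.ofReal (A.det ^ a * (1 - A).det ^ b) * ∫⁻ u, bfun a b u) *
        (if v ⬝ᵥ (A⁻¹ + (1 - A)⁻¹) *ᵥ v < 1 then
          ENNReal.ofReal ((1 - v ⬝ᵥ (A⁻¹ + (1 - A)⁻¹) *ᵥ v) ^ (a + b + 1)) else 0) := by
      intro v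
      refine (lintegral_mono fun c => GG_bord_le hA hA' v c).trans ?_
      rw [lintegral_const_mul' _ _ ENNReal.ofReal_ne_top, mul_assoc]
      gcongr
      have e : 1 - v ⬝ᵥ (A⁻¹ + (1 - A)⁻¹) *ᵥ v =
          1 - v ⬝ᵥ A⁻¹ *ᵥ v - v ⬝ᵥ (1 - A)⁻¹ *ᵥ v := by
        rw [Matrix.add_mulVec, dotProduct_add]; ring
      rw [e]
      by_cases hL : v ⬝ᵥ (A⁻¹ + (1 - A)⁻¹) *ᵥ v < 1
      · rw [if_pos hL, c_int ha hb _ _ (by rw [← e]; linarith), mul_comm]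
      · rw [if_neg hL, mul_zero]
        refine le_of_eq ?_
        rw [lintegral_eq_zero_of_ae_eq_zero]
        refine Filter.Eventually.of_forall fun c => ?_
        beta_reduce
        rw [if_neg]
        · rfl
        · rintro ⟨h1, h2⟩
          linarith
    refine (lintegral_mono key).trans ?_
    rw [lintegral_const_mul' _ _ (ENNReal.mul_ne_top ENNReal.ofReal_ne_top
      (bfun_lintegral ha hb).ne), v_int hM, det_inv_add hA hA']
    unfold GG
    rw [if_pos ⟨hA, hA'⟩]
    have e : A.det ^ (a + 1 / 2) * (1 - A).det ^ (b + 1 / 2) =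
      (A.det ^ a * (1 - A).det ^ b) * ((A.det * (1 - A).det)⁻¹) ^ (-(1 / 2) : ℝ) := by
      rw [Real.inv_rpow (by positivity), Real.rpow_neg (by positivity), inv_inv,
        Real.mul_rpow p1.le p2.le, Real.rpow_add p1, Real.rpow_add p2]
      ring
    rw [e, ENNReal.ofReal_mul (p := A.det ^ a * (1 - A).det ^ b) (by positivity)]
    refine le_of_eq ?_
    ring
  · have : ∀ v c, GG (n + 1) a b (bord A v c) = 0 := by
      intro v c
      unfold GG
      rw [if_neg]
      rintro ⟨h1, h2⟩
      rw [one_sub_bord] at h2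
      exact h ⟨bord_sub h1, bord_sub h2⟩
    simp [this]

/-- Index splitting. -/
def idxFun (n : ℕ) : SymIdx n ⊕ (Fin n ⊕ Unit) → SymIdx (n + 1) :=
  Sum.elim (fun p => ⟨(p.1.1.succ, p.1.2.succ), Fin.succ_le_succ_iff.2 p.2⟩)
    (Sum.elim (fun j => ⟨(0, j.succ), Fin.zero_le _⟩) (fun _ => ⟨(0, 0), le_rfl⟩))

lemma idxFun_bij (n : ℕ) : Function.Bijective (idxFun n) := by
  constructor
  · rintro (⟨⟨i, j⟩, h⟩ | j | _) (⟨⟨i', j'⟩, h'⟩ | j' | _) hh <;>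
      simp_all [idxFun, Fin.succ_ne_zero, (Fin.succ_ne_zero _).symm]
  · rintro ⟨⟨i, j⟩, h⟩
    revert h
    refine Fin.cases ?_ (fun i => ?_) i <;> refine Fin.cases ?_ (fun j => ?_) j <;> intro h
    · exact ⟨Sum.inr (Sum.inr ()), rfl⟩
    · exact ⟨Sum.inr (Sum.inl j), rfl⟩
    · exact absurd h (by simp [Fin.le_def])
    · exact ⟨Sum.inl ⟨(i, j), Fin.succ_le_succ_iff.1 h⟩, rfl⟩

noncomputable def idxEquiv (n : ℕ) : SymIdx n ⊕ (Fin n ⊕ Unit) ≃ SymIdx (n + 1) :=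
  Equiv.ofBijective _ (idxFun_bij n)

lemma sym_bord {n : ℕ} (g : SymIdx (n + 1) → ℝ) :
    symOfFun (n + 1) g = bord (symOfFun n fun p => g (idxFun n (Sum.inl p)))
      (fun j => g (idxFun n (Sum.inr (Sum.inl j)))) (g (idxFun n (Sum.inr (Sum.inr ())))) := by
  ext i j
  refine Fin.cases ?_ (fun i => ?_) i <;> refine Fin.cases ?_ (fun j => ?_) j
  · simp [symOfFun, idxFun]
  · simp [symOfFun, idxFun]
  · simp [symOfFun, idxFun]
  · simp [symOfFun, idxFun]

lemma lintegral_split (n : ℕ) (F : Matrix (Fin (n + 1)) (Fin (n + 1)) ℝ → ℝ≥0∞) :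
    ∫⁻ g, F (symOfFun (n + 1) g) ≤
      ∫⁻ f, ∫⁻ v : Fin n → ℝ, ∫⁻ c : ℝ, F (bord (symOfFun n f) v c) := by
  have m1 := volume_measurePreserving_piCongrLeft (fun _ : SymIdx (n + 1) => ℝ) (idxEquiv n)
  have m2 := volume_measurePreserving_sumPiEquivProdPi_symm
    (fun _ : SymIdx n ⊕ (Fin n ⊕ Unit) => ℝ)
  have m3 := volume_measurePreserving_sumPiEquivProdPi_symm (fun _ : Fin n ⊕ Unit => ℝ)
  rw [← m1.lintegral_comp_emb (MeasurableEquiv.measurableEmbedding _),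
    ← m2.lintegral_comp_emb (MeasurableEquiv.measurableEmbedding _)]
  refine (lintegral_prod_le _).trans (lintegral_mono fun f => ?_)
  rw [← m3.lintegral_comp_emb (MeasurableEquiv.measurableEmbedding _)]
  refine (lintegral_prod_le _).trans (lintegral_mono fun v => ?_)
  have m4 := (volume_preserving_funUnique Unit ℝ)
  rw [← m4.lintegral_comp_emb (MeasurableEquiv.measurableEmbedding _)]
  refine lintegral_mono fun c => ?_
  beta_reduce
  rw [sym_bord]
  have e : ∀ (h : SymIdx n ⊕ (Fin n ⊕ Unit) → ℝ) x,
      (MeasurableEquiv.piCongrLeft (fun _ : SymIdx (n + 1) => ℝ) (idxEquiv n)) h (idxFun n x)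
        = h x := fun h x =>
    MeasurableEquiv.piCongrLeft_apply_apply (β := fun _ : SymIdx (n + 1) => ℝ) (idxEquiv n) h x
  simp only [e]
  exact le_rfl

lemma GG_finite (n : ℕ) : ∀ (a b : ℝ), -1 < a → -1 < b →
    ∫⁻ f, GG n a b (symOfFun n f) < ⊤ := by
  induction n with
  | zero =>
    intro a b _ _
    rw [lintegral_unique]
    refine ENNReal.mul_lt_top ?_ (by simp [volume_pi])
    unfold GG
    split_ifs <;> simp
  | succ n ih =>
    intro a b ha hb
    refine (lintegral_split n _).trans_lt ?_
    refine (lintegral_mono fun f => GG_step ha hb (symOfFun n f)).trans_lt ?_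
    have hC := ENNReal.mul_lt_top (bfun_lintegral ha hb)
      (ballFun_lintegral n (t := a + b + 1) (by linarith))
    rw [lintegral_const_mul' _ _ hC.ne]
    exact ENNReal.mul_lt_top hC (ih _ _ (by linarith) (by linarith))

instance (n : ℕ) : BorelSpace (Matrix (Fin n) (Fin n) ℝ) :=
  inferInstanceAs (BorelSpace (Fin n → Fin n → ℝ))

lemma symOfFun_measurable (n : ℕ) : Measurable (symOfFun n) := by
  refine measurable_pi_lambda _ fun i => measurable_pi_lambda _ fun j => ?_
  unfold symOfFun
  split_ifs
  · exact measurable_pi_apply _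
  · exact measurable_pi_apply _

lemma measurableSet_posDef (n : ℕ) :
    MeasurableSet {x : Matrix (Fin n) (Fin n) ℝ | x.PosDef} := by
  have h : {x : Matrix (Fin n) (Fin n) ℝ | x.PosDef} =
      ({x | xᵀ = x} ∩ ⋂ v : Fin n → ℝ, {x | 0 ≤ v ⬝ᵥ x *ᵥ v}) ∩ {x | x.det ≠ 0} := by
    ext x
    simp only [Set.mem_setOf_eq, Set.mem_inter_iff, Set.mem_iInter]
    constructor
    · intro h
      exact ⟨⟨h.isHermitian, fun v => h.posSemidef.dotProduct_mulVec_nonneg v⟩, h.det_pos.ne'⟩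
    · rintro ⟨⟨h1, h2⟩, h3⟩
      have : x.PosSemidef := Matrix.PosSemidef.of_dotProduct_mulVec_nonneg h1 h2
      exact this.posDef_iff_det_ne_zero.2 h3
  rw [h]
  refine MeasurableSet.inter (IsClosed.inter ?_ ?_).measurableSet (IsOpen.measurableSet ?_)
  · exact isClosed_eq (by fun_prop) continuous_id
  · refine isClosed_iInter fun v => isClosed_le continuous_const ?_
    fun_prop
  · exact isOpen_ne_fun (by fun_prop) continuous_const

/-- Absolute convergence of the matrix beta integral: for `Re μ, Re ν > (q-1)/2` the
function `x ↦ det(x)^{μ-(q+1)/2} det(I-x)^{ν-(q+1)/2}` is integrable over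
`{x ∈ Sym(q,ℝ) : 0 < x < I}`. -/
theorem stmt_13 (hq : 1 ≤ q) (μ ν : ℂ)
    (hμ : μ.re > ((q : ℝ) - 1) / 2) (hν : ν.re > ((q : ℝ) - 1) / 2) :
    IntegrableOn
      (fun x : Matrix (Fin q) (Fin q) ℝ =>
        ((x.det : ℝ) : ℂ) ^ (μ - ((q : ℂ) + 1) / 2) *
          (((1 - x).det : ℝ) : ℂ) ^ (ν - ((q : ℂ) + 1) / 2))
      {x : Matrix (Fin q) (Fin q) ℝ | x.PosDef ∧ (1 - x).PosDef}
      (symMeasure q) := by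

  have mdet : Measurable fun x : Matrix (Fin q) (Fin q) ℝ => x.det :=
    (Continuous.matrix_det continuous_id).measurable
  have mdet' : Measurable fun x : Matrix (Fin q) (Fin q) ℝ => (1 - x).det :=
    (Continuous.matrix_det (continuous_const.sub continuous_id)).measurable
  have mS : MeasurableSet {x : Matrix (Fin q) (Fin q) ℝ | x.PosDef ∧ (1 - x).PosDef} :=
    (measurableSet_posDef q).inter
      ((continuous_const.sub continuous_id).measurable (measurableSet_posDef q))
  refine ⟨Measurable.aestronglyMeasurable (by fun_prop), ?_⟩
  unfold HasFiniteIntegral symMeasure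
  rw [← lintegral_indicator mS]
  refine (lintegral_map_le _ _).trans_lt ?_
  refine lt_of_le_of_lt (lintegral_mono fun f => ?_)
    (GG_finite q (μ.re - ((q : ℝ) + 1) / 2) (ν.re - ((q : ℝ) + 1) / 2)
      (by linarith) (by linarith))
  unfold GG Set.indicator
  split_ifs with h h' h'
  · have p1 := h.1.det_pos
    have p2 := h.2.det_pos
    beta_reduce
    rw [← ofReal_norm, norm_mul, Complex.norm_cpow_eq_rpow_re_of_pos p1,
      Complex.norm_cpow_eq_rpow_re_of_pos p2]
    refine ENNReal.ofReal_le_ofReal (le_of_eq ?_)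
    simp
  · exact absurd h h'
  · simp
  · simp
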